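/- Let p be an odd prime. The representation zeta function of SL₂(ℤ_p) vanishes p-adically at s = −2: the series ∑_{n≥1} rₙ(SL₂(ℤ_p))·n², with terms regarded as elements of ℚ_p, converges in ℚ_p and its sum equals 0. -/

import Mathlib

open scoped MatrixGroups

/-- A submodule `W` of `ℂ^n` is invariant under a matrix representation `ρ` if it is stable
under the action of every `ρ g`. -/
def RepInvariant {G : Type*} [Group G] {n : ℕ} (ρ : G →* GL (Fin n) ℂ)
    (W : Submodule ℂ (Fin n → ℂ)) : Prop :=
  ∀ g : G, ∀ v ∈ W, Matrix.mulVec (ρ g : Matrix (Fin n) (Fin n) ℂ) v ∈ W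

/-- A matrix representation `ρ : G →* GLₙ(ℂ)` is irreducible if the associated `ℂG`-module
`ℂ^n` is simple, i.e. nonzero and without proper nonzero invariant submodules. -/
def RepIsIrreducible {G : Type*} [Group G] {n : ℕ} (ρ : G →* GL (Fin n) ℂ) : Prop :=
  (⊥ : Submodule ℂ (Fin n → ℂ)) ≠ ⊤ ∧
    ∀ W : Submodule ℂ (Fin n → ℂ), RepInvariant ρ W → W = ⊥ ∨ W = ⊤

/-- Two matrix representations are isomorphic if they are conjugate by an element of
`GLₙ(ℂ)`. -/
def RepIso {G : Type*} [Group G] {n : ℕ} (ρ₁ ρ₂ : G →* GL (Fin n) ℂ) : Prop :=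
  ∃ T : GL (Fin n) ℂ, ∀ g : G, T * ρ₁ g * T⁻¹ = ρ₂ g

/-- A matrix representation of a topological group is continuous if it is continuous into
`GLₙ(ℂ)` with its standard topology, i.e. the map on matrix entries is continuous. -/
def RepContinuous {G : Type*} [Group G] [TopologicalSpace G] {n : ℕ}
    (ρ : G →* GL (Fin n) ℂ) : Prop :=
  Continuous fun g : G => (ρ g : Matrix (Fin n) (Fin n) ℂ)

/-- `rₙ(G)` for a topological group `G`: the number of isomorphism classes of continuous
`n`-dimensional irreducible complex representations of `G`. -/
noncomputable def contIrrRepCount (G : Type*) [Group G] [TopologicalSpace G] (n : ℕ) : ℕ :=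
  Nat.card (Quot fun ρ₁ ρ₂ : {ρ : G →* GL (Fin n) ℂ // RepContinuous ρ ∧ RepIsIrreducible ρ} =>
    RepIso ρ₁.1 ρ₂.1)

/-- The special linear group over a topological ring carries the topology induced from the
space of matrices. -/
noncomputable instance (n : Type*) [DecidableEq n] [Fintype n]
    (R : Type*) [CommRing R] [TopologicalSpace R] :
    TopologicalSpace (Matrix.SpecialLinearGroup n R) :=
  inferInstanceAs (TopologicalSpace {A : Matrix n n R // A.det = 1})

/-!
Write `G = SL₂(R)` for a `p`-adic topological ring `R` such as `ℤ_p`, and let `Γ(k)` be the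
congruence subgroup of level `p ^ k`. Let `b ≥ 2`.

Since `GLₙ(ℂ)` has no small subgroups, a continuous representation of `G` is trivial on some
`Γ(k)`. Let `V` be irreducible and trivial on `Γ(a + b + 2)` with `a ≥ b + 2`. Then `Γ(a)` acts
through an abelian `p`-group, so `V` is a direct sum of weight spaces of `Γ(a)`, and the pro-`p`
group `Γ(1)` permutes the weights in orbits of `p`-power length. If `p ^ b` does not divide `dim V`,
some orbit is shorter than `p ^ b`; every `p ^ (b - 1)`-th power of an element of `Γ(1)` then fixes
each weight in it. Applied to the elementary matrices with entry `p`, this shows that a weight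
vector `v` is fixed by all commutators of `Γ(a)` with the elementary matrices with entry `p ^ b`.
Modulo `Γ(a + b + 2)` these commutators generate `Γ(a + b + 1)`, which therefore fixes `v` and acts
trivially on `V`. Descending, `V` is trivial on `Γ(2 * b + 3)`.

So for every `f` there is an open normal subgroup `N`, of index divisible by `p ^ f`, on which every
irreducible representation whose dimension is not a multiple of `p ^ f` is trivial. Modulo `p ^ f`
the series agrees termwise with the finite sum `∑ rₙ(G/N) n² = |G/N| ≡ 0`.
-/

section Wedderburn

open scoped Matrix

variable {K Q : Type*} [Field K] [Monoid Q] {m : ℕ} {d : Fin m → ℕ}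
  (Φ : MonoidAlgebra K Q ≃ₐ[K] Π i, Matrix (Fin (d i)) (Fin (d i)) K)

/-- The `i`-th irreducible representation of `Q` over `K`, read off from a Wedderburn
decomposition `Φ` of the monoid algebra: `Q` acts on column vectors through the `i`-th block. -/
noncomputable def wedderburnRep (i : Fin m) : Representation K Q (Fin (d i) → K) :=
  ((Matrix.toLinAlgEquiv'.toAlgHom.comp ((Pi.evalAlgHom K _ i).comp Φ.toAlgHom) :
    MonoidAlgebra K Q →ₐ[K] Module.End K (Fin (d i) → K)) : _ →* _).comp (MonoidAlgebra.of K Q)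

theorem wedderburnRep_apply (i : Fin m) (g : Q) (x : Fin (d i) → K) :
    wedderburnRep Φ i g x = Φ (MonoidAlgebra.of K Q g) i *ᵥ x :=
  rfl

theorem wedderburnRep_asAlgebraHom_apply (i : Fin m) (a : MonoidAlgebra K Q) (x : Fin (d i) → K) :
    (wedderburnRep Φ i).asAlgebraHom a x = Φ a i *ᵥ x := by
  induction a using MonoidAlgebra.induction_on with
  | of g => rw [Representation.asAlgebraHom_of, wedderburnRep_apply]
  | add a b ha hb => simp [Matrix.add_mulVec, ha, hb]
  | smul c a ha => simp [Matrix.smul_mulVec, ha]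

theorem intertwiningMap_asAlgebraHom_apply {V W : Type*} [AddCommGroup V] [Module K V]
    [AddCommGroup W] [Module K W] {ρ : Representation K Q V} {σ : Representation K Q W}
    (f : ρ.IntertwiningMap σ) (a : MonoidAlgebra K Q) (v : V) :
    f (ρ.asAlgebraHom a v) = σ.asAlgebraHom a (f v) :=
  (Representation.IntertwiningMap.equivLinearMapAsModule ρ σ f).map_smul a v

theorem subrepresentation_asAlgebraHom_mem {V : Type*} [AddCommGroup V] [Module K V]
    {ρ : Representation K Q V} (W : Subrepresentation ρ) (a : MonoidAlgebra K Q) {v : V}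
    (hv : v ∈ W) : ρ.asAlgebraHom a v ∈ W :=
  W.asSubmodule.smul_mem a hv

theorem wedderburnRep_isIrreducible (i : Fin m) [NeZero (d i)] :
    (wedderburnRep Φ i).IsIrreducible where
  exists_pair_ne := ⟨⊥, ⊤, fun h => (bot_ne_top : (⊥ : Submodule K (Fin (d i) → K)) ≠ ⊤)
    (congrArg Subrepresentation.toSubmodule h)⟩
  eq_bot_or_eq_top W := by
    refine or_iff_not_imp_left.2 fun hW => ?_
    obtain ⟨v, hvW, hv⟩ : ∃ v ∈ W, v ≠ 0 := by
      by_contra! h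
      exact hW (Subrepresentation.toSubmodule_injective ((Submodule.eq_bot_iff _).2 h))
    obtain ⟨j, hj⟩ := Function.ne_iff.1 hv
    refine Subrepresentation.toSubmodule_injective (eq_top_iff.2 fun w _ => ?_)
    have h := subrepresentation_asAlgebraHom_mem W
      (Φ.symm (Pi.single i (Matrix.vecMulVec w (Pi.single j (v j)⁻¹)))) hvW
    rw [wedderburnRep_asAlgebraHom_apply, Φ.apply_symm_apply, Pi.single_eq_same,
      Matrix.vecMulVec_mulVec] at h
    simpa [inv_mul_cancel₀ hj] using! h

theorem eq_of_wedderburnRep_equiv {V : Type*} [AddCommGroup V] [Module K V]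
    {ρ : Representation K Q V} {i j : Fin m} [NeZero (d i)] (φ : (wedderburnRep Φ i).Equiv ρ)
    (ψ : (wedderburnRep Φ j).Equiv ρ) : i = j := by
  by_contra hij
  let θ := φ.trans ψ.symm
  have hθ (x : Fin (d i) → K) : θ x = 0 := by
    have h := intertwiningMap_asAlgebraHom_apply θ.toIntertwiningMap (Φ.symm (Pi.single i 1)) x
    simpa [wedderburnRep_asAlgebraHom_apply, Pi.single_eq_of_ne' hij] using h
  exact one_ne_zero (θ.toLinearEquiv.map_eq_zero_iff.1 (hθ 1))

/-- The equivariant map from the `i`-th block to `ρ` which identifies column vectors with the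
`j`-th column of the block and sends it to `V` by acting on `v`. -/
noncomputable def wedderburnColumnMap {V : Type*} [AddCommGroup V] [Module K V]
    (ρ : Representation K Q V) (i : Fin m) (j : Fin (d i)) (v : V) :
    (wedderburnRep Φ i).IntertwiningMap ρ where
  toFun x := ρ.asAlgebraHom (Φ.symm (Pi.single i (Matrix.vecMulVec x (Pi.single j 1)))) v
  map_add' x y := by simp [Matrix.add_vecMulVec, Pi.single_add]
  map_smul' c x := by simp [Matrix.smul_vecMulVec, Pi.single_smul]
  isIntertwining' g := by
    refine LinearMap.ext fun x => ?_
    have h : Φ.symm (Pi.single i (Matrix.vecMulVec (Φ (MonoidAlgebra.of K Q g) i *ᵥ x)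
        (Pi.single j 1))) = MonoidAlgebra.of K Q g *
          Φ.symm (Pi.single i (Matrix.vecMulVec x (Pi.single j 1))) := by
      rw [Φ.symm_apply_eq, map_mul, Φ.apply_symm_apply, ← Matrix.mul_vecMulVec,
        Pi.single_mul_right]
    change ρ.asAlgebraHom (Φ.symm (Pi.single i (Matrix.vecMulVec _ _))) v = _
    rw [wedderburnRep_apply, h, map_mul, Representation.asAlgebraHom_of]
    rfl

theorem sum_single_vecMulVec_single :
    ∑ i, ∑ j, (Pi.single i (Matrix.vecMulVec (Pi.single j 1) (Pi.single j 1)) :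
      Π i, Matrix (Fin (d i)) (Fin (d i)) K) = 1 := by
  have h (i : Fin m) : ∑ j : Fin (d i), Matrix.vecMulVec (Pi.single j 1) (Pi.single j 1) =
      (1 : Matrix (Fin (d i)) (Fin (d i)) K) := by
    ext a b
    simp [Matrix.sum_apply, Matrix.vecMulVec_apply, Matrix.one_apply, Pi.single_apply]
  have hsingle (i : Fin m) : ∑ j, (Pi.single i (Matrix.vecMulVec (Pi.single j 1) (Pi.single j 1)) :
      Π i, Matrix (Fin (d i)) (Fin (d i)) K) = Pi.single i 1 := by
    rw [← h]
    exact (map_sum (AddMonoidHom.single (fun i => Matrix (Fin (d i)) (Fin (d i)) K) i) _ _).symm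
  simp_rw [hsingle]
  exact Finset.univ_sum_single 1

theorem exists_wedderburnRep_equiv [∀ i, NeZero (d i)] {V : Type*} [AddCommGroup V] [Module K V]
    (ρ : Representation K Q V) [ρ.IsIrreducible] :
    ∃ i, Nonempty ((wedderburnRep Φ i).Equiv ρ) := by
  have (i : Fin m) := wedderburnRep_isIrreducible Φ i
  by_contra! h
  have hzero (i : Fin m) (j : Fin (d i)) (v : V) : wedderburnColumnMap Φ ρ i j v = 0 :=
    Subsingleton.elim _ _
  have hV (v : V) : v = 0 := by
    calc v = ρ.asAlgebraHom (Φ.symm 1) v := by simp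
      _ = ∑ i, ∑ j, wedderburnColumnMap Φ ρ i j v (Pi.single j 1) := by
        simp only [← sum_single_vecMulVec_single, map_sum, LinearMap.sum_apply]
        rfl
      _ = 0 := by
        simp only [hzero, Representation.IntertwiningMap.coe_zero, Pi.zero_apply,
          Finset.sum_const_zero]
  exact bot_ne_top (α := Subrepresentation ρ) (Subrepresentation.toSubmodule_injective
    (((Submodule.eq_bot_iff _).2 fun v _ => hV v).symm))

theorem natCard_quot_eq_of_surjective {α β : Type*} {r : α → α → Prop} {f : α → β}
    (hf : Function.Surjective f) (hr : ∀ x y, r x y ↔ f x = f y) :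
    Nat.card (Quot r) = Nat.card β := by
  refine Nat.card_eq_of_bijective (Quot.lift f fun x y h => (hr x y).1 h) ⟨?_, ?_⟩
  · rintro ⟨x⟩ ⟨y⟩ h
    exact Quot.sound ((hr x y).2 h)
  · exact fun b => (hf b).imp' (Quot.mk r) fun _ h => h

include Φ in
theorem natCard_quot_irreducible_eq [∀ i, NeZero (d i)] (n : ℕ) :
    Nat.card (Quot fun σ₁ σ₂ : {σ : Representation K Q (Fin n → K) // σ.IsIrreducible} =>
      Nonempty (σ₁.1.Equiv σ₂.1)) = Nat.card {i // d i = n} := by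
  have hblock (σ : {σ : Representation K Q (Fin n → K) // σ.IsIrreducible}) :
      ∃ i : {i // d i = n}, Nonempty ((wedderburnRep Φ i).Equiv σ.1) := by
    have := σ.2
    obtain ⟨i, ⟨φ⟩⟩ := exists_wedderburnRep_equiv Φ σ.1
    exact ⟨⟨i, by simpa using φ.toLinearEquiv.finrank_eq⟩, ⟨φ⟩⟩
  choose block hblock using hblock
  refine natCard_quot_eq_of_surjective (f := block) ?_ fun σ τ => ?_
  · rintro ⟨i, rfl⟩
    let σ : {σ : Representation K Q (Fin (d i) → K) // σ.IsIrreducible} :=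
      ⟨wedderburnRep Φ i, wedderburnRep_isIrreducible Φ i⟩
    obtain ⟨φ⟩ := hblock σ
    exact ⟨σ, Subtype.ext (eq_of_wedderburnRep_equiv Φ φ (.refl _))⟩
  · obtain ⟨φ⟩ := hblock σ
    obtain ⟨ψ⟩ := hblock τ
    constructor
    · rintro ⟨θ⟩
      exact Subtype.ext (eq_of_wedderburnRep_equiv Φ (φ.trans θ) ψ)
    · intro h
      rw [h] at φ
      exact ⟨φ.symm.trans ψ⟩

include Φ in
theorem sum_sq_wedderburn_eq_natCard [Finite Q] : ∑ i, d i ^ 2 = Nat.card Q := by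
  have := Fintype.ofFinite Q
  have h := Φ.toLinearEquiv.finrank_eq
  rw [(MonoidAlgebra.coeffLinearEquiv K).finrank_eq, Module.finrank_finsupp_self,
    Module.finrank_pi_fintype] at h
  simpa [Module.finrank_matrix, sq] using h.symm

end Wedderburn

section MatrixRepresentation

open scoped Matrix

/-- The linear representation on `K^n` attached to a matrix representation. -/
noncomputable def matrixRep {K G : Type*} [Field K] [Group G] {n : ℕ} (ρ : G →* GL (Fin n) K) :
    Representation K G (Fin n → K) :=
  Matrix.toLinAlgEquiv'.toMulEquiv.toMonoidHom.comp ((Units.coeHom _).comp ρ)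

section

variable {K G : Type*} [Field K] [Group G] {n : ℕ}

theorem matrixRep_apply (ρ : G →* GL (Fin n) K) (g : G) (v : Fin n → K) :
    matrixRep ρ g v = (ρ g : Matrix (Fin n) (Fin n) K) *ᵥ v :=
  rfl

theorem ker_matrixRep (ρ : G →* GL (Fin n) K) : (matrixRep ρ).ker = ρ.ker := by
  ext g
  rw [MonoidHom.mem_ker, MonoidHom.mem_ker, Units.ext_iff]
  exact map_eq_one_iff _ Matrix.toLinAlgEquiv'.injective

theorem matrixRep_bijective :
    Function.Bijective (matrixRep : (G →* GL (Fin n) K) → Representation K G (Fin n → K)) := by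
  refine ⟨fun ρ₁ ρ₂ h => ?_, fun σ => ?_⟩
  · ext1 g
    exact Units.ext (Matrix.toLinAlgEquiv'.injective (DFunLike.congr_fun h g))
  · refine ⟨(Matrix.toLinAlgEquiv'.symm.toMulEquiv.toMonoidHom.comp σ).toHomUnits, ?_⟩
    ext1 g
    exact Matrix.toLinAlgEquiv'.apply_symm_apply (σ g)

end

variable {G : Type*} [Group G] {n : ℕ}

theorem repIsIrreducible_iff {ρ : G →* GL (Fin n) ℂ} :
    RepIsIrreducible ρ ↔ (matrixRep ρ).IsIrreducible := by
  constructor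
  · rintro ⟨hne, h⟩
    exact
      { exists_pair_ne := ⟨⊥, ⊤, fun h => hne (congrArg Subrepresentation.toSubmodule h)⟩
        eq_bot_or_eq_top := fun W =>
          (h W.toSubmodule fun g v hv => W.apply_mem_toSubmodule g hv).imp
            (fun h => Subrepresentation.toSubmodule_injective h)
            (fun h => Subrepresentation.toSubmodule_injective h) }
  · intro h
    refine ⟨fun hne => bot_ne_top (α := Subrepresentation (matrixRep ρ))
      (Subrepresentation.toSubmodule_injective hne), fun W hW => ?_⟩
    exact (eq_bot_or_eq_top (⟨W, fun g v hv => hW g v hv⟩ : Subrepresentation (matrixRep ρ))).imp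
      (congrArg Subrepresentation.toSubmodule) (congrArg Subrepresentation.toSubmodule)

theorem repIso_iff {ρ₁ ρ₂ : G →* GL (Fin n) ℂ} :
    RepIso ρ₁ ρ₂ ↔ Nonempty ((matrixRep ρ₁).Equiv (matrixRep ρ₂)) := by
  have hconj (T : GL (Fin n) ℂ) (g : G) : T * ρ₁ g * T⁻¹ = ρ₂ g ↔
      ∀ v, (T : Matrix _ _ ℂ) *ᵥ matrixRep ρ₁ g v = matrixRep ρ₂ g ((T : Matrix _ _ ℂ) *ᵥ v) := by
    simp only [mul_inv_eq_iff_eq_mul, Units.ext_iff, Units.val_mul, matrixRep_apply,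
      Matrix.mulVec_mulVec]
    exact Matrix.ext_iff_mulVec
  constructor
  · rintro ⟨T, hT⟩
    exact ⟨.mk (LinearMap.GeneralLinearGroup.generalLinearEquiv ℂ _
      (Matrix.GeneralLinearGroup.toLin T)) fun g => LinearMap.ext ((hconj T g).1 (hT g))⟩
  · rintro ⟨φ⟩
    obtain ⟨T, hT⟩ := (Matrix.GeneralLinearGroup.toLin.trans
      (LinearMap.GeneralLinearGroup.generalLinearEquiv ℂ _)).surjective φ.toLinearEquiv
    have hTφ (v : Fin n → ℂ) : (T : Matrix _ _ ℂ) *ᵥ v = φ v := LinearEquiv.congr_fun hT v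
    refine ⟨T, fun g => (hconj T g).2 fun v => ?_⟩
    rw [hTφ, hTφ]
    exact φ.toIntertwiningMap.isIntertwining _ _ g v

variable {Q : Type*} [Group Q] {m : ℕ} {d : Fin m → ℕ}

theorem contIrrRepCount_eq_card_blocks [TopologicalSpace Q] [DiscreteTopology Q]
    [∀ i, NeZero (d i)] (Φ : MonoidAlgebra ℂ Q ≃ₐ[ℂ] Π i, Matrix (Fin (d i)) (Fin (d i)) ℂ)
    (n : ℕ) : contIrrRepCount Q n = Nat.card {i // d i = n} := by
  rw [← natCard_quot_irreducible_eq Φ n]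
  let e : {ρ : Q →* GL (Fin n) ℂ // RepContinuous ρ ∧ RepIsIrreducible ρ} ≃
      {σ : Representation ℂ Q (Fin n → ℂ) // σ.IsIrreducible} :=
    (Equiv.ofBijective _ matrixRep_bijective).subtypeEquiv fun ρ =>
      (and_iff_right continuous_of_discreteTopology).trans repIsIrreducible_iff
  exact Nat.card_congr (Quot.congr e fun _ _ => repIso_iff)

theorem hasSum_contIrrRepCount_mul_sq [Finite Q] [TopologicalSpace Q] [DiscreteTopology Q] :
    HasSum (fun n => contIrrRepCount Q (n + 1) * (n + 1) ^ 2) (Nat.card Q) := by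
  have : NeZero (Nat.card Q : ℂ) := ⟨by exact_mod_cast Nat.card_pos.ne'⟩
  have : Module.Finite ℂ (MonoidAlgebra ℂ Q) :=
    Module.Finite.equiv (MonoidAlgebra.coeffLinearEquiv ℂ).symm
  obtain ⟨m, d, hd, ⟨Φ⟩⟩ :=
    IsSemisimpleRing.exists_algEquiv_pi_matrix_of_isAlgClosed ℂ (MonoidAlgebra ℂ Q)
  rw [← sum_sq_wedderburn_eq_natCard Φ]
  have h : (fun n => contIrrRepCount Q (n + 1) * (n + 1) ^ 2) =
      fun n => ∑ i, if d i = n + 1 then d i ^ 2 else 0 := by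
    ext n
    rw [contIrrRepCount_eq_card_blocks Φ, Nat.card_eq_fintype_card, Fintype.card_subtype,
      ← Finset.sum_filter, Finset.sum_congr rfl fun i hi => by rw [(Finset.mem_filter.1 hi).2],
      Finset.sum_const, smul_eq_mul]
  have hterm (i : Fin m) : HasSum (fun n => if d i = n + 1 then d i ^ 2 else 0) (d i ^ 2) := by
    obtain ⟨k, hk⟩ := Nat.exists_eq_succ_of_ne_zero (hd i).out
    simp only [hk, Nat.succ_eq_add_one, add_left_inj, eq_comm (a := k)]
    exact hasSum_ite_eq k _
  exact h ▸ hasSum_sum fun i _ => hterm i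

end MatrixRepresentation

section QuotientCount

variable {G : Type*} [Group G] {n : ℕ} (N : Subgroup G) [N.Normal]

theorem repContinuous_comp_mk'_iff [TopologicalSpace G] {ρ : G ⧸ N →* GL (Fin n) ℂ} :
    RepContinuous (ρ.comp (QuotientGroup.mk' N)) ↔ RepContinuous ρ :=
  ((QuotientGroup.isQuotientMap_mk N).continuous_iff (g := fun x => (ρ x).val)).symm

theorem repIsIrreducible_comp_mk'_iff {ρ : G ⧸ N →* GL (Fin n) ℂ} :
    RepIsIrreducible (ρ.comp (QuotientGroup.mk' N)) ↔ RepIsIrreducible ρ := by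
  have hinv (W : Submodule ℂ (Fin n → ℂ)) :
      RepInvariant (ρ.comp (QuotientGroup.mk' N)) W ↔ RepInvariant ρ W := by
    rw [RepInvariant, RepInvariant, (QuotientGroup.mk'_surjective N).forall]
    rfl
  simp only [RepIsIrreducible, hinv]

theorem repIso_comp_mk'_iff {ρ₁ ρ₂ : G ⧸ N →* GL (Fin n) ℂ} :
    RepIso (ρ₁.comp (QuotientGroup.mk' N)) (ρ₂.comp (QuotientGroup.mk' N)) ↔ RepIso ρ₁ ρ₂ := by
  simp only [RepIso, (QuotientGroup.mk'_surjective N).forall]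
  rfl

theorem contIrrRepCount_quotient [TopologicalSpace G]
    (hN : ∀ ρ : G →* GL (Fin n) ℂ, RepContinuous ρ → RepIsIrreducible ρ → N ≤ ρ.ker) :
    contIrrRepCount (G ⧸ N) n = contIrrRepCount G n := by
  let e : {ρ : G ⧸ N →* GL (Fin n) ℂ // RepContinuous ρ ∧ RepIsIrreducible ρ} ≃
      {ρ : G →* GL (Fin n) ℂ // RepContinuous ρ ∧ RepIsIrreducible ρ} :=
    { toFun := fun ρ => ⟨ρ.1.comp (QuotientGroup.mk' N),
        (repContinuous_comp_mk'_iff N).2 ρ.2.1, (repIsIrreducible_comp_mk'_iff N).2 ρ.2.2⟩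
      invFun := fun ρ => ⟨QuotientGroup.lift N ρ.1 (hN ρ.1 ρ.2.1 ρ.2.2),
        (repContinuous_comp_mk'_iff N).1 ρ.2.1, (repIsIrreducible_comp_mk'_iff N).1 ρ.2.2⟩
      left_inv := fun ρ => Subtype.ext (QuotientGroup.monoidHom_ext N rfl)
      right_inv := fun ρ => rfl }
  exact Nat.card_congr (Quot.congr e fun _ _ => (repIso_comp_mk'_iff N).symm)

end QuotientCount

section PadicSum

open Filter Topology

variable {p : ℕ} [Fact p.Prime]

theorem tendsto_natCast_padic_zero {α : Type*} {l : Filter α} {u : α → ℕ}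
    (hu : ∀ f : ℕ, ∀ᶠ x in l, p ^ f ∣ u x) : Tendsto (fun x => (u x : ℚ_[p])) l (𝓝 0) := by
  refine Metric.nhds_basis_ball.tendsto_right_iff.2 fun ε hε => ?_
  obtain ⟨f, hf⟩ := PadicInt.exists_pow_neg_lt p hε
  filter_upwards [hu f] with x hx
  rw [mem_ball_zero_iff]
  refine lt_of_le_of_lt ?_ hf
  exact_mod_cast (Padic.norm_int_le_pow_iff_dvd (p := p) (u x) f).2 (by exact_mod_cast hx)

theorem hasSum_contIrrRepCount_mul_sq_padic {G : Type*} [Group G] [TopologicalSpace G]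
    [ContinuousMul G]
    (hG : ∀ f : ℕ, ∃ N : Subgroup G, ∃ _ : N.Normal, N.FiniteIndex ∧ IsOpen (N : Set G) ∧
      p ^ f ∣ N.index ∧ ∀ (n : ℕ) (ρ : G →* GL (Fin n) ℂ), ¬ p ^ f ∣ n →
        RepContinuous ρ → RepIsIrreducible ρ → N ≤ ρ.ker) :
    HasSum (fun n => ((contIrrRepCount G (n + 1) * (n + 1) ^ 2 : ℕ) : ℚ_[p])) 0 := by
  suffices h : ∀ f : ℕ, ∀ᶠ s : Finset ℕ in atTop,
      p ^ f ∣ ∑ n ∈ s, contIrrRepCount G (n + 1) * (n + 1) ^ 2 by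
    simpa only [HasSum, SummationFilter.unconditional_filter, Nat.cast_sum] using
      tendsto_natCast_padic_zero h
  intro f
  obtain ⟨N, _, _, hNopen, hindex, hker⟩ := hG f
  have := QuotientGroup.discreteTopology hNopen
  have hmod (n : ℕ) : contIrrRepCount G (n + 1) * (n + 1) ^ 2 ≡
      contIrrRepCount (G ⧸ N) (n + 1) * (n + 1) ^ 2 [MOD p ^ f] := by
    by_cases hn : p ^ f ∣ n + 1
    · have hsq : p ^ f ∣ (n + 1) ^ 2 := hn.trans (dvd_pow_self _ two_ne_zero)
      exact (Nat.modEq_zero_iff_dvd.2 (hsq.mul_left _)).trans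
        (Nat.modEq_zero_iff_dvd.2 (hsq.mul_left _)).symm
    · rw [contIrrRepCount_quotient N fun ρ => hker _ ρ hn]
  have hsum : HasSum (fun n => contIrrRepCount (G ⧸ N) (n + 1) * (n + 1) ^ 2) N.index :=
    hasSum_contIrrRepCount_mul_sq
  filter_upwards [hsum.eventually_mem (mem_nhds_discrete.2 rfl : {N.index} ∈ 𝓝 N.index)] with s hs
  refine (Nat.ModEq.dvd_iff (.sum fun n _ => hmod n) dvd_rfl).2 ?_
  rwa [Set.mem_singleton_iff.1 hs]

end PadicSum

section Orbits

variable {G X : Type*} [Group G] [MulAction G X]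

theorem dvd_sum_of_dvd_card_orbit [Fintype X] {q : ℕ} {m : X → ℕ}
    (hm : ∀ (g : G) x, m (g • x) = m x)
    (hq : ∀ x : X, q ∣ Nat.card (MulAction.orbit G x)) : q ∣ ∑ x, m x := by
  classical
  have := Fintype.ofFinite (MulAction.orbitRel.Quotient G X)
  have (ω : MulAction.orbitRel.Quotient G X) : Fintype ω.orbit := Fintype.ofFinite _
  have hsum : ∑ x, m x = ∑ ω : MulAction.orbitRel.Quotient G X, ∑ y : ω.orbit, m y := by
    rw [← (MulAction.selfEquivSigmaOrbits' G X).symm.sum_comp, Fintype.sum_sigma]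
    rfl
  rw [hsum]
  refine Finset.dvd_sum fun ω _ => ?_
  induction ω using Quotient.inductionOn' with | h x => ?_
  have hconst (y : MulAction.orbitRel.Quotient.orbit (G := G) (Quotient.mk'' x)) : m y = m x := by
    obtain ⟨g, hg⟩ := Quotient.exact' (MulAction.orbitRel.Quotient.mem_orbit.1 y.2)
    exact (congrArg m hg.symm).trans (hm g x)
  simp only [hconst, Finset.sum_const, Finset.card_univ, smul_eq_mul, ← Nat.card_eq_fintype_card]
  exact (hq x).mul_right _

theorem pow_dvd_card_orbit {p : ℕ} [Fact p.Prime] (hG : IsPGroup p G) {x : X}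
    [Finite (MulAction.orbit G x)] {f : ℕ} {g : G} (hg : g ^ p ^ f • x ≠ x) :
    p ^ (f + 1) ∣ Nat.card (MulAction.orbit G x) := by
  have hp : 1 < p := (Fact.out : p.Prime).one_lt
  have hle : Nat.card (MulAction.orbit (Subgroup.zpowers g) x) ≤ Nat.card (MulAction.orbit G x) :=
    Nat.card_mono (Set.toFinite _) (MulAction.orbit_subgroup_subset _ x)
  have : Finite (MulAction.orbit (Subgroup.zpowers g) x) :=
    Set.Finite.subset (Set.toFinite _) (MulAction.orbit_subgroup_subset _ x)
  obtain ⟨i, hi⟩ := hG.card_orbit x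
  obtain ⟨j, hj⟩ := (hG.to_subgroup (Subgroup.zpowers g)).card_orbit x
  have hfj : f < j := by
    by_contra! hjf
    refine hg (MulAction.pow_smul_eq_iff_period_dvd.2 ?_)
    have := Fintype.ofFinite (MulAction.orbit (Subgroup.zpowers g) x)
    rw [MulAction.period, MulAction.minimalPeriod_eq_card, ← Nat.card_eq_fintype_card, hj]
    exact pow_dvd_pow p hjf
  rw [hi]
  rw [hi, hj, Nat.pow_le_pow_iff_right hp] at hle
  exact pow_dvd_pow p (hfj.trans_le hle)

end Orbits

section Clifford

variable {K G V : Type*} [Field K] [Group G] [AddCommGroup V] [Module K V]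

open scoped commutatorElement

attribute [local instance] arrowAction

/-- The simultaneous eigenspace of the operators `ρ a`, `a ∈ A`, with eigenvalues `χ a`. The
weights `χ` are plain functions; a nonzero weight space forces `χ` to be a character. -/
def weightSpace (ρ : Representation K G V) (A : Subgroup G) (χ : A → K) : Submodule K V :=
  ⨅ a : A, Module.End.eigenspace (ρ a) (χ a)

variable {ρ : Representation K G V} {A : Subgroup G}

theorem mem_weightSpace {χ : A → K} {v : V} :
    v ∈ weightSpace ρ A χ ↔ ∀ a : A, ρ a v = χ a • v := by
  simp only [weightSpace, Submodule.mem_iInf, Module.End.mem_eigenspace_iff]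

open scoped Classical in
theorem isInternal_weightSpace {p : ℕ} [NeZero (p : K)] [IsAlgClosed K] [FiniteDimensional K V]
    [IsMulCommutative A] (hG : IsPGroup p G) :
    DirectSum.IsInternal fun χ : {χ : A → K // weightSpace ρ A χ ≠ ⊥} => weightSpace ρ A χ.1 := by
  classical
  let T (a : A) : Module.End K V := ρ a
  have hcomm (a b : A) : Commute (T a) (T b) := by
    rw [commute_iff_eq, ← map_mul, ← map_mul, ← Subgroup.coe_mul, mul_comm' a b, Subgroup.coe_mul]
  have hsemisimple (a : A) : (T a).IsSemisimple := by
    obtain ⟨e, he⟩ := hG a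
    have hsq : Squarefree (Polynomial.X ^ p ^ e - 1 : Polynomial K) :=
      (Polynomial.X_pow_sub_one_separable_iff.2
        (by exact_mod_cast pow_ne_zero e (NeZero.ne (p : K)))).squarefree
    refine Module.End.isSemisimple_of_squarefree_aeval_eq_zero hsq ?_
    rw [map_sub, Polynomial.aeval_X_pow, map_one, ← map_pow, he, map_one, sub_self]
  have hW : weightSpace ρ A = fun χ => ⨅ a, (T a).maxGenEigenspace (χ a) := by
    ext1 χ
    simp only [(hsemisimple _).isFinitelySemisimple.maxGenEigenspace_eq_eigenspace]
    rfl
  rw [DirectSum.isInternal_ne_bot_iff, hW]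
  refine DirectSum.isInternal_submodule_of_iSupIndep_of_iSup_eq_top ?_ ?_
  · exact Module.End.independent_iInf_maxGenEigenspace_of_forall_mapsTo T
      fun a b μ => Module.End.mapsTo_maxGenEigenspace_of_comm (hcomm b a) μ
  · exact Module.End.iSup_iInf_maxGenEigenspace_eq_top_of_iSup_maxGenEigenspace_eq_top_of_commute T
      (fun a b _ => hcomm a b) fun a => Module.End.iSup_maxGenEigenspace_eq_top _

variable [A.Normal]

theorem apply_mem_weightSpace_smul_iff {χ : A → K} {g : ConjAct G} {v : V} :
    ρ (ConjAct.ofConjAct g) v ∈ weightSpace ρ A (g • χ) ↔ v ∈ weightSpace ρ A χ := by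
  rw [mem_weightSpace, mem_weightSpace, (MulAction.surjective g).forall]
  refine forall_congr' fun a => ?_
  have hconj : ρ ((g • a : A) : G) (ρ (ConjAct.ofConjAct g) v) =
      ρ (ConjAct.ofConjAct g) (ρ a v) := by
    simp only [← Module.End.mul_apply, ← map_mul]
    rw [ConjAct.Subgroup.val_conj_smul, ConjAct.smul_def, inv_mul_cancel_right]
  have hweight : (g • χ) (g • a) = χ a := congrArg χ (inv_smul_smul g a)
  rw [hconj, hweight, ← map_smul, (ρ.apply_bijective _).injective.eq_iff]

theorem finrank_weightSpace_smul (χ : A → K) (g : ConjAct G) :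
    Module.finrank K (weightSpace ρ A (g • χ)) = Module.finrank K (weightSpace ρ A χ) := by
  have hbij := ρ.apply_bijective (ConjAct.ofConjAct g)
  have hcomap : (weightSpace ρ A (g • χ)).comap (ρ (ConjAct.ofConjAct g)) = weightSpace ρ A χ :=
    Submodule.ext fun _ => apply_mem_weightSpace_smul_iff
  rw [(Submodule.equivMapOfInjective _ hbij.injective (weightSpace ρ A χ)).finrank_eq, ← hcomap,
    Submodule.map_comap_eq_of_surjective hbij.surjective]

/-- The weights of `A` on `V`, permuted by the conjugation action of the ambient group. -/
def weights (ρ : Representation K G V) (A : Subgroup G) [A.Normal] :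
    SubMulAction (ConjAct G) (A → K) where
  carrier := {χ | weightSpace ρ A χ ≠ ⊥}
  smul_mem' g χ hχ := by
    obtain ⟨v, hv, hv0⟩ := (Submodule.ne_bot_iff _).1 hχ
    refine (Submodule.ne_bot_iff _).2
      ⟨_, apply_mem_weightSpace_smul_iff.2 hv, fun h => hv0 ?_⟩
    exact (ρ.apply_bijective _).injective (h.trans (map_zero _).symm)

theorem commutator_apply_eq_self_of_smul_eq {χ : A → K} {g : G} {x : A} {v : V}
    (hv : v ∈ weightSpace ρ A χ) (hg : ConjAct.toConjAct g • χ = χ) : ρ ⁅g, (x : G)⁆ v = v := by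
  rw [mem_weightSpace] at hv
  have hχ : χ (ConjAct.toConjAct g • x) = χ x := by
    conv_lhs => rw [← hg]
    exact congrArg χ (inv_smul_smul _ x)
  calc ρ ⁅g, (x : G)⁆ v
      = ρ (ConjAct.toConjAct g • x : A) (ρ (x⁻¹ : A) v) := by
        rw [← Module.End.mul_apply, ← map_mul]; rfl
    _ = ρ x (ρ (x⁻¹ : A) v) := by rw [hv, map_smul, map_smul, hv, hv x, hχ]
    _ = v := by rw [Subgroup.coe_inv, ρ.self_inv_apply]

theorem pow_dvd_finrank_of_isPGroup {p : ℕ} [Fact p.Prime] [NeZero (p : K)] [IsAlgClosed K]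
    [FiniteDimensional K V] [IsMulCommutative A] (hG : IsPGroup p G) {f : ℕ}
    (hfix : ∀ v : V, v ≠ 0 → ∃ g : G, ∃ x ∈ A, ρ ⁅g ^ p ^ f, x⁆ v ≠ v) :
    p ^ (f + 1) ∣ Module.finrank K V := by
  classical
  have hint : DirectSum.IsInternal fun χ : weights ρ A => weightSpace ρ A χ.1 :=
    isInternal_weightSpace hG
  have : Finite (weights ρ A) :=
    WellFoundedGT.finite_of_iSupIndep hint.submodule_iSupIndep fun χ => χ.2
  have := Fintype.ofFinite (weights ρ A)
  rw [← (LinearEquiv.ofBijective (DirectSum.coeLinearMap _) hint).finrank_eq,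
    Module.finrank_directSum]
  refine dvd_sum_of_dvd_card_orbit (G := ConjAct G) (fun g χ => finrank_weightSpace_smul χ.1 g) ?_
  intro χ
  obtain ⟨v, hv, hv0⟩ := (Submodule.ne_bot_iff _).1 χ.2
  obtain ⟨g, x, hx, hgx⟩ := hfix v hv0
  have hGc : IsPGroup p (ConjAct G) := hG.of_equiv ConjAct.toConjAct
  refine pow_dvd_card_orbit hGc (g := ConjAct.toConjAct g) fun hfixed => hgx ?_
  exact commutator_apply_eq_self_of_smul_eq (x := ⟨x, hx⟩) hv (congrArg Subtype.val hfixed)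

theorem pow_dvd_finrank {p : ℕ} [Fact p.Prime] [NeZero (p : K)] [IsAlgClosed K]
    [FiniteDimensional K V] (hG : ∀ g : G, ∃ e : ℕ, g ^ p ^ e ∈ ρ.ker) (hA : ⁅A, A⁆ ≤ ρ.ker) {f : ℕ}
    (hfix : ∀ v : V, v ≠ 0 → ∃ g : G, ∃ x ∈ A, ρ ⁅g ^ p ^ f, x⁆ v ≠ v) :
    p ^ (f + 1) ∣ Module.finrank K V := by
  let π := QuotientGroup.mk' ρ.ker
  have hπ (g : G) (hg : g ∈ ρ.ker) : π g = 1 := (QuotientGroup.eq_one_iff g).2 hg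
  have hπsurj : Function.Surjective π := QuotientGroup.mk'_surjective _
  let ρ' : Representation K (G ⧸ ρ.ker) V := QuotientGroup.lift ρ.ker ρ le_rfl
  have hpgroup : IsPGroup p (G ⧸ ρ.ker) := by
    refine hπsurj.forall.2 fun g => (hG g).imp fun e he => ?_
    rw [← map_pow, hπ _ he]
  have : (A.map π).Normal := ‹A.Normal›.map π hπsurj
  have : IsMulCommutative (A.map π) := by
    rw [← Subgroup.commutator_self_eq_bot_iff, ← Subgroup.map_commutator, Subgroup.map_eq_bot_iff,
      QuotientGroup.ker_mk']
    exact hA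
  refine pow_dvd_finrank_of_isPGroup (ρ := ρ') (A := A.map π) hpgroup fun v hv => ?_
  obtain ⟨g, x, hx, hgx⟩ := hfix v hv
  refine ⟨π g, π x, Subgroup.mem_map_of_mem π hx, ?_⟩
  rwa [← map_pow, ← map_commutatorElement]

end Clifford

section CongruenceSubgroups

open scoped commutatorElement

/-- The principal congruence subgroup of level `I`: the matrices in `SLₙ(R)` congruent to the
identity modulo the ideal `I`. -/
def principalCongruenceSubgroup (n : Type*) [Fintype n] [DecidableEq n] {R : Type*} [CommRing R]
    (I : Ideal R) : Subgroup (Matrix.SpecialLinearGroup n R) :=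
  (Matrix.SpecialLinearGroup.map (Ideal.Quotient.mk I)).ker

local notation "Γ" => principalCongruenceSubgroup (Fin 2)
local notation "upper" => Matrix.SpecialLinearGroup.transvection (zero_ne_one (α := Fin 2))
local notation "lower" => Matrix.SpecialLinearGroup.transvection (one_ne_zero (α := Fin 2))

section CongruenceLevel

variable {n R : Type*} [Fintype n] [DecidableEq n] [CommRing R] {I J : Ideal R}

theorem mul_mem_matrix {X Y : Matrix n n R} (hX : X ∈ I.matrix n) (hY : Y ∈ J.matrix n) :
    X * Y ∈ (I * J).matrix n := fun i j => by
  rw [Matrix.mul_apply]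
  exact sum_mem fun k _ => Ideal.mul_mem_mul (hX i k) (hY k j)

instance : (principalCongruenceSubgroup n I).Normal :=
  inferInstanceAs (MonoidHom.ker _).Normal

theorem map_mk_eq_map_mk_iff {g h : Matrix.SpecialLinearGroup n R} :
    Matrix.SpecialLinearGroup.map (Ideal.Quotient.mk I) g =
        Matrix.SpecialLinearGroup.map (Ideal.Quotient.mk I) h ↔
      (g : Matrix n n R) - h ∈ I.matrix n := by
  simp only [Matrix.SpecialLinearGroup.ext_iff, Matrix.SpecialLinearGroup.map_apply_coe,
    RingHom.mapMatrix_apply, Matrix.map_apply, Ideal.Quotient.mk_eq_mk_iff_sub_mem,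
    Ideal.mem_matrix, Matrix.sub_apply]

theorem mem_principalCongruenceSubgroup {g : Matrix.SpecialLinearGroup n R} :
    g ∈ principalCongruenceSubgroup n I ↔ (g : Matrix n n R) - 1 ∈ I.matrix n := by
  rw [principalCongruenceSubgroup, MonoidHom.mem_ker,
    ← map_one (Matrix.SpecialLinearGroup.map (Ideal.Quotient.mk I)), map_mk_eq_map_mk_iff,
    Matrix.SpecialLinearGroup.coe_one]

theorem principalCongruenceSubgroup_mono :
    Monotone (principalCongruenceSubgroup n : Ideal R → _) := fun I J h g => by
  simpa only [mem_principalCongruenceSubgroup] using fun hg => Ideal.matrix_monotone n h hg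

theorem exists_map_mk_eq_one_add_smul {a : R} {g : Matrix.SpecialLinearGroup n R}
    (hg : g ∈ principalCongruenceSubgroup n (Ideal.span {a} ⊔ J)) : ∃ X : Matrix n n R,
      (Matrix.SpecialLinearGroup.map (Ideal.Quotient.mk J) g : Matrix n n (R ⧸ J)) =
        1 + Ideal.Quotient.mk J a • (Ideal.Quotient.mk J).mapMatrix X := by
  rw [mem_principalCongruenceSubgroup] at hg
  choose X r hr hX using fun i j => Ideal.mem_span_singleton_sup.1 (hg i j)
  refine ⟨Matrix.of X, Matrix.ext fun i j => ?_⟩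
  have hgij : g i j = (1 : Matrix n n R) i j + a * X i j + r i j := by
    rw [add_assoc, mul_comm, hX, Matrix.sub_apply, add_sub_cancel]
  simp [hgij, Ideal.Quotient.eq_zero_iff_mem.2 (hr i j), Matrix.one_apply, apply_ite]

theorem commutator_principalCongruenceSubgroup_le :
    ⁅principalCongruenceSubgroup n I, principalCongruenceSubgroup n J⁆ ≤
      principalCongruenceSubgroup n (I * J) := by
  refine Subgroup.commutator_le.2 fun g hg h hh => ?_
  have hmul : (g : Matrix n n R) * h - h * g =
      (g - 1 : Matrix n n R) * (h - 1) - (h - 1) * (g - 1) := by noncomm_ring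
  rw [mem_principalCongruenceSubgroup] at hg hh
  rw [principalCongruenceSubgroup, MonoidHom.mem_ker, map_commutatorElement,
    commutatorElement_eq_one_iff_mul_comm, ← map_mul, ← map_mul, map_mk_eq_map_mk_iff,
    Matrix.SpecialLinearGroup.coe_mul, Matrix.SpecialLinearGroup.coe_mul, hmul]
  exact sub_mem (mul_mem_matrix hg hh) (mul_comm J I ▸ mul_mem_matrix hh hg)

theorem pow_mem_principalCongruenceSubgroup_mul {m : ℕ} (hIJ : I ≤ J) (hm : (m : R) ∈ J)
    {x : Matrix.SpecialLinearGroup n R} (hx : x ∈ principalCongruenceSubgroup n I) :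
    x ^ m ∈ principalCongruenceSubgroup n (I * J) := by
  have hsum : ∑ i ∈ Finset.range m, (x : Matrix n n R) ^ i ∈ J.matrix n := by
    have heq : ∑ i ∈ Finset.range m, (x : Matrix n n R) ^ i =
        ∑ i ∈ Finset.range m, ((x : Matrix n n R) ^ i - 1) + (m : Matrix n n R) := by
      simp only [Finset.sum_sub_distrib, Finset.sum_const, Finset.card_range, nsmul_one,
        sub_add_cancel]
    rw [heq]
    refine add_mem (sum_mem fun i _ => ?_) fun i j => ?_
    · rw [← Matrix.SpecialLinearGroup.coe_pow]
      exact mem_principalCongruenceSubgroup.1 (principalCongruenceSubgroup_mono hIJ (pow_mem hx i))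
    · rw [← Matrix.diagonal_natCast, Matrix.diagonal_apply]
      split_ifs
      exacts [hm, J.zero_mem]
  rw [mem_principalCongruenceSubgroup, Matrix.SpecialLinearGroup.coe_pow, ← mul_geom_sum]
  exact mul_mem_matrix (mem_principalCongruenceSubgroup.1 hx) hsum

theorem pow_pow_mem_principalCongruenceSubgroup {m : ℕ} (hm : (m : R) ∈ I)
    {x : Matrix.SpecialLinearGroup n R} (hx : x ∈ principalCongruenceSubgroup n I) (k : ℕ) :
    x ^ m ^ k ∈ principalCongruenceSubgroup n (I ^ (k + 1)) := by
  induction k with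
  | zero => simpa only [pow_zero, pow_one, zero_add] using hx
  | succ k ih =>
    rw [pow_succ m, pow_mul, pow_succ I]
    exact pow_mem_principalCongruenceSubgroup_mul (Ideal.pow_le_self k.succ_ne_zero) hm ih

instance [Finite (R ⧸ I)] : (principalCongruenceSubgroup n I).FiniteIndex :=
  have : Finite (Matrix.SpecialLinearGroup n (R ⧸ I)) :=
    inferInstanceAs (Finite {_A : Matrix n n _ // _})
  Subgroup.finiteIndex_ker _

theorem transvection_mem_principalCongruenceSubgroup_iff {i j : n} (hij : i ≠ j) {t : R} :
    Matrix.SpecialLinearGroup.transvection hij t ∈ principalCongruenceSubgroup n I ↔ t ∈ I := by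
  rw [mem_principalCongruenceSubgroup, Matrix.SpecialLinearGroup.transvection_coe,
    add_sub_cancel_left]
  refine ⟨fun h => by simpa using h i j, fun h k l => ?_⟩
  rw [Matrix.single_apply]
  split_ifs
  exacts [h, I.zero_mem]

theorem transvection_pow {i j : n} (hij : i ≠ j) (t : R) (m : ℕ) :
    Matrix.SpecialLinearGroup.transvection hij t ^ m =
      Matrix.SpecialLinearGroup.transvection hij (m * t) := by
  induction m with
  | zero =>
    rw [pow_zero, Nat.cast_zero, zero_mul, Matrix.SpecialLinearGroup.transvection_coeff_zero]
  | succ m ih =>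
    rw [pow_succ, ih, ← Matrix.SpecialLinearGroup.transvection_add, Nat.cast_succ, add_one_mul]

theorem map_transvection {S : Type*} [CommRing S] (f : R →+* S) {i j : n} (hij : i ≠ j) (t : R) :
    Matrix.SpecialLinearGroup.map f (Matrix.SpecialLinearGroup.transvection hij t) =
      Matrix.SpecialLinearGroup.transvection hij (f t) :=
  Subtype.ext <| by
    simp only [Matrix.SpecialLinearGroup.map_apply_coe, Matrix.SpecialLinearGroup.transvection_coe,
      map_add, map_one, RingHom.mapMatrix_apply, Matrix.map_single]

end CongruenceLevel

section SpecialLinearTwo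

variable {R : Type*} [CommRing R]

/-- The unipotent matrix `1 + c • !![1, -1; 1, -1]`. To leading order, commutators of elementary
matrices are diagonal; the commutators of elementary matrices with this one supply the
off-diagonal directions. -/
def diagonalUnipotent (c : R) : SL(2, R) :=
  ⟨!![1 + c, -c; c, 1 - c], by rw [Matrix.det_fin_two_of]; ring⟩

theorem coe_diagonalUnipotent (c : R) :
    (diagonalUnipotent c : Matrix (Fin 2) (Fin 2) R) = !![1 + c, -c; c, 1 - c] :=
  rfl

theorem map_diagonalUnipotent {S : Type*} [CommRing S] (f : R →+* S) (c : R) :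
    Matrix.SpecialLinearGroup.map f (diagonalUnipotent c) = diagonalUnipotent (f c) := by
  ext i j
  fin_cases i <;> fin_cases j <;>
    simp [Matrix.SpecialLinearGroup.map_apply_coe, coe_diagonalUnipotent]

theorem diagonalUnipotent_mem {I : Ideal R} {c : R} (hc : c ∈ I) : diagonalUnipotent c ∈ Γ I := by
  rw [mem_principalCongruenceSubgroup]
  intro i j
  fin_cases i <;> fin_cases j <;> simp [coe_diagonalUnipotent, hc]

theorem coe_transvection_zero_one (t : R) :
    (upper t : Matrix (Fin 2) (Fin 2) R) = !![1, t; 0, 1] := by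
  ext i j
  fin_cases i <;> fin_cases j <;> simp [Matrix.SpecialLinearGroup.transvection_coe]

theorem coe_transvection_one_zero (t : R) :
    (lower t : Matrix (Fin 2) (Fin 2) R) = !![1, 0; t, 1] := by
  ext i j
  fin_cases i <;> fin_cases j <;> simp [Matrix.SpecialLinearGroup.transvection_coe]

section Commutators

variable {t c : R} (ht : t * t * c = 0) (hc : t * c * c = 0)

include ht hc

theorem coe_commutator_upper_lower :
    ((⁅upper t, lower c⁆ : SL(2, R)) : Matrix (Fin 2) (Fin 2) R) =
      !![1 + t * c, 0; 0, 1 - t * c] := by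
  simp only [commutatorElement_def, Matrix.SpecialLinearGroup.coe_mul,
    Matrix.SpecialLinearGroup.coe_inv, coe_transvection_zero_one, coe_transvection_one_zero,
    Matrix.adjugate_fin_two_of, Matrix.mul_fin_two]
  congr! 3 <;> grind

theorem coe_commutator_upper_diagonalUnipotent :
    ((⁅upper t, diagonalUnipotent c⁆ : SL(2, R)) : Matrix (Fin 2) (Fin 2) R) =
      !![1 + t * c, -2 * (t * c); 0, 1 - t * c] := by
  simp only [commutatorElement_def, Matrix.SpecialLinearGroup.coe_mul,
    Matrix.SpecialLinearGroup.coe_inv, coe_transvection_zero_one, coe_diagonalUnipotent,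
    Matrix.adjugate_fin_two_of, Matrix.mul_fin_two]
  congr! 3 <;> grind

theorem coe_commutator_lower_diagonalUnipotent :
    ((⁅lower t, diagonalUnipotent c⁆ : SL(2, R)) : Matrix (Fin 2) (Fin 2) R) =
      !![1 + t * c, 0; 2 * (t * c), 1 - t * c] := by
  simp only [commutatorElement_def, Matrix.SpecialLinearGroup.coe_mul,
    Matrix.SpecialLinearGroup.coe_inv, coe_transvection_one_zero, coe_diagonalUnipotent,
    Matrix.adjugate_fin_two_of, Matrix.mul_fin_two]
  congr! 3 <;> grind

theorem eq_commutator_mul_commutator {g : SL(2, R)} {X : Matrix (Fin 2) (Fin 2) R}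
    (hg : (g : Matrix (Fin 2) (Fin 2) R) = 1 + (2 * t * c) • X) :
    g = ⁅upper t, lower (c * (2 * X 0 0 + X 0 1 - X 1 0))⁆ *
      ⁅upper t, diagonalUnipotent (c * -X 0 1)⁆ * ⁅lower t, diagonalUnipotent (c * X 1 0)⁆ := by
  have ht' (s : R) : t * t * (c * s) = 0 := by rw [← mul_assoc, ht, zero_mul]
  have hc' (s : R) : t * (c * s) * (c * s) = 0 := by linear_combination s ^ 2 * hc
  have hdet := g.det_coe
  have hentries : (g : Matrix (Fin 2) (Fin 2) R) = !![1 + 2 * t * c * X 0 0, 2 * t * c * X 0 1;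
      2 * t * c * X 1 0, 1 + 2 * t * c * X 1 1] := by
    rw [hg]
    ext i j
    fin_cases i <;> fin_cases j <;> simp
  rw [hentries, Matrix.det_fin_two_of] at hdet
  refine Subtype.ext (hentries.trans ?_)
  rw [Matrix.SpecialLinearGroup.coe_mul, Matrix.SpecialLinearGroup.coe_mul,
    coe_commutator_upper_lower (ht' _) (hc' _),
    coe_commutator_upper_diagonalUnipotent (ht' _) (hc' _),
    coe_commutator_lower_diagonalUnipotent (ht' _) (hc' _), Matrix.mul_fin_two, Matrix.mul_fin_two]
  congr! 3 <;> grind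

end Commutators

theorem principalCongruenceSubgroup_le_of_commutator_mem {t c : R} {J : Ideal R}
    (ht : t * t * c ∈ J) (hc : t * c * c ∈ J) {S : Subgroup SL(2, R)} (hS : Γ J ≤ S)
    (hupper : ∀ x ∈ Γ (Ideal.span {c}), ⁅upper t, x⁆ ∈ S)
    (hlower : ∀ x ∈ Γ (Ideal.span {c}), ⁅lower t, x⁆ ∈ S) :
    Γ (Ideal.span {2 * t * c} ⊔ J) ≤ S := by
  intro g hg
  have hmem (s : R) : c * s ∈ Ideal.span {c} :=
    Ideal.mul_mem_right _ _ (Ideal.mem_span_singleton_self c)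
  obtain ⟨X, hX⟩ := exists_map_mk_eq_one_add_smul hg
  let h : SL(2, R) := ⁅upper t, lower (c * (2 * X 0 0 + X 0 1 - X 1 0))⁆ *
    ⁅upper t, diagonalUnipotent (c * -X 0 1)⁆ * ⁅lower t, diagonalUnipotent (c * X 1 0)⁆
  have hhS : h ∈ S := mul_mem (mul_mem
    (hupper _ ((transvection_mem_principalCongruenceSubgroup_iff _).2 (hmem _)))
    (hupper _ (diagonalUnipotent_mem (hmem _)))) (hlower _ (diagonalUnipotent_mem (hmem _)))
  have hgh : Matrix.SpecialLinearGroup.map (Ideal.Quotient.mk J) g =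
      Matrix.SpecialLinearGroup.map (Ideal.Quotient.mk J) h := by
    simp only [← Ideal.Quotient.eq_zero_iff_mem, map_mul] at ht hc
    rw [map_mul, map_mul, map_ofNat] at hX
    rw [eq_commutator_mul_commutator ht hc hX]
    simp only [h, map_mul, map_commutatorElement, map_transvection, map_diagonalUnipotent,
      RingHom.mapMatrix_apply, Matrix.map_apply, map_sub, map_add, map_ofNat, map_neg]
  rw [← mul_inv_cancel_left h g]
  refine mul_mem hhS (hS ?_)
  rw [principalCongruenceSubgroup, MonoidHom.mem_ker, map_mul, map_inv, hgh, inv_mul_cancel]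

end SpecialLinearTwo

section NatCastSpan

variable {R : Type*} [CommRing R]

-- The factor `2` costs nothing: `q = q ^ 2 - q * (q - 1)` and `q * (q - 1)` is even.
theorem span_natCast_pow_succ_le (q k : ℕ) :
    Ideal.span {(q : R)} ^ (k + 1) ≤
      Ideal.span {2 * (q : R) ^ k} ⊔ Ideal.span {(q : R)} ^ (k + 2) := by
  obtain ⟨m, hm⟩ := (Int.even_mul_pred_self q).two_dvd
  have hqm : (q : R) * (q - 1) = 2 * m := by exact_mod_cast congrArg (Int.cast (R := R)) hm
  rw [Ideal.span_singleton_pow, Ideal.span_singleton_pow, Ideal.span_singleton_le_iff_mem,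
    Ideal.mem_span_singleton_sup]
  exact ⟨-m, _, Ideal.mem_span_singleton_self _, by linear_combination (q : R) ^ k * hqm⟩

theorem principalCongruenceSubgroup_pow_succ_le {q a b : ℕ} (ha : 2 ≤ a) (hb : 2 ≤ b)
    {S : Subgroup SL(2, R)} (hS : Γ (Ideal.span {(q : R)} ^ (a + b + 2)) ≤ S)
    (hupper : ∀ x ∈ Γ (Ideal.span {(q : R)} ^ a), ⁅upper ((q : R) ^ b), x⁆ ∈ S)
    (hlower : ∀ x ∈ Γ (Ideal.span {(q : R)} ^ a), ⁅lower ((q : R) ^ b), x⁆ ∈ S) :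
    Γ (Ideal.span {(q : R)} ^ (a + b + 1)) ≤ S := by
  have hmem {l : ℕ} (hl : a + b + 2 ≤ l) :
      (q : R) ^ l ∈ Ideal.span {(q : R)} ^ (a + b + 2) :=
    Ideal.pow_le_pow_right hl (Ideal.pow_mem_pow (Ideal.mem_span_singleton_self _) _)
  rw [Ideal.span_singleton_pow _ a] at hupper hlower
  refine (principalCongruenceSubgroup_mono ?_).trans <|
    principalCongruenceSubgroup_le_of_commutator_mem (t := (q : R) ^ b) (c := (q : R) ^ a)
      ?_ ?_ hS hupper hlower
  · rw [mul_assoc, ← pow_add, add_comm b a]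
    exact span_natCast_pow_succ_le q (a + b)
  · rw [← pow_add, ← pow_add]
    exact hmem (by omega)
  · rw [← pow_add, ← pow_add]
    exact hmem (by omega)

theorem pow_succ_dvd_index_principalCongruenceSubgroup {n : Type*} [Fintype n] [DecidableEq n]
    {i j : n} (hij : i ≠ j) {p : ℕ} [Fact p.Prime] {I : Ideal R} {k : ℕ} (hk : (p : R) ^ k ∉ I)
    (hk' : (p : R) ^ (k + 1) ∈ I) : p ^ (k + 1) ∣ (principalCongruenceSubgroup n I).index := by
  let x : Matrix.SpecialLinearGroup n R ⧸ principalCongruenceSubgroup n I :=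
    QuotientGroup.mk (Matrix.SpecialLinearGroup.transvection hij 1)
  have hx (l : ℕ) : x ^ p ^ l = 1 ↔ (p : R) ^ l ∈ I := by
    rw [← QuotientGroup.mk_pow, QuotientGroup.eq_one_iff, transvection_pow, mul_one,
      transvection_mem_principalCongruenceSubgroup_iff, Nat.cast_pow]
  have horder : orderOf x = p ^ (k + 1) :=
    orderOf_eq_prime_pow (mt (hx k).1 hk) ((hx (k + 1)).2 hk')
  exact horder ▸ orderOf_dvd_natCard x

theorem natCast_pow_notMem_span_pow_succ [CharZero R] {q : ℕ} (hq : q ≠ 0)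
    [IsHausdorff (Ideal.span {(q : R)}) R] (k : ℕ) :
    (q : R) ^ k ∉ Ideal.span {(q : R)} ^ (k + 1) := by
  intro h
  rw [Ideal.span_singleton_pow, Ideal.mem_span_singleton'] at h
  obtain ⟨r, hr⟩ := h
  have hpow (m : ℕ) : (q : R) ^ k = (r * q) ^ m * (q : R) ^ k := by
    induction m with
    | zero => rw [pow_zero, one_mul]
    | succ m ih => rw [pow_succ, mul_assoc, mul_assoc, ← pow_succ', hr, ← ih]
  suffices hzero : (q : R) ^ k = 0 from
    pow_ne_zero k hq (Nat.cast_eq_zero.1 ((Nat.cast_pow q k).trans hzero))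
  refine IsHausdorff.haus ‹_› _ fun m => ?_
  rw [SModEq.zero, smul_eq_mul, Ideal.mul_top, hpow m, mul_pow]
  exact Ideal.mul_mem_right _ _ (Ideal.mul_mem_left _ _
    (Ideal.pow_mem_pow (Ideal.mem_span_singleton_self _) m))

end NatCastSpan

section Continuity

open Filter Topology

section NoSmallSubgroups

variable {A : Type*} [NormedRing A] [NormedAlgebra ℝ A]

-- From `2 (x - 1) = (x ^ 2 - 1) - (x - 1) ^ 2`, a bound on the distance from `1` of all powers of
-- `x` improves by the factor `(1 + r) / 2`.
theorem eq_one_of_forall_norm_pow_sub_one_le {x : A} {r : ℝ} (hr : r < 1)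
    (hx : ∀ m : ℕ, ‖x ^ m - 1‖ ≤ r) : x = 1 := by
  have hr0 : 0 ≤ r := (norm_nonneg _).trans (hx 0)
  have hbound (k m : ℕ) : ‖x ^ m - 1‖ ≤ ((1 + r) / 2) ^ k * r := by
    induction k generalizing m with
    | zero => simpa only [pow_zero, one_mul] using hx m
    | succ k ih =>
      have hdouble : (2 : ℝ) • (x ^ m - 1) = (x ^ (m * 2) - 1) - (x ^ m - 1) * (x ^ m - 1) := by
        rw [two_smul, pow_mul, sq]
        noncomm_ring
      have hnorm : 2 * ‖x ^ m - 1‖ ≤ ((1 + r) / 2) ^ k * r + r * (((1 + r) / 2) ^ k * r) := calc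
        2 * ‖x ^ m - 1‖ = ‖(x ^ (m * 2) - 1) - (x ^ m - 1) * (x ^ m - 1)‖ := by
          rw [← hdouble, norm_smul, Real.norm_two]
        _ ≤ ‖x ^ (m * 2) - 1‖ + ‖x ^ m - 1‖ * ‖x ^ m - 1‖ :=
          (norm_sub_le _ _).trans (by gcongr; exact norm_mul_le _ _)
        _ ≤ _ := by gcongr; exacts [ih _, hx m, ih m]
      calc
        ‖x ^ m - 1‖ ≤ (((1 + r) / 2) ^ k * r + r * (((1 + r) / 2) ^ k * r)) / 2 := by linarith
        _ = ((1 + r) / 2) ^ (k + 1) * r := by ring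
  have hlim : Tendsto (fun k => ((1 + r) / 2) ^ k * r) atTop (𝓝 0) := by
    simpa only [zero_mul] using
      (tendsto_pow_atTop_nhds_zero_of_lt_one (by positivity) (by linarith)).mul_const r
  rw [← sub_eq_zero, ← norm_le_zero_iff, ← pow_one x]
  exact ge_of_tendsto' hlim fun k => hbound k 1

end NoSmallSubgroups

section CongruenceTopology

variable {n R : Type*} [Fintype n] [DecidableEq n] [CommRing R] [TopologicalSpace R]

instance [IsTopologicalRing R] : IsTopologicalGroup (Matrix.SpecialLinearGroup n R) :=
  Matrix.SpecialLinearGroup.topologicalGroup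

variable {I : Ideal R}

theorem isOpen_principalCongruenceSubgroup [IsTopologicalRing R] (hI : IsOpen (I : Set R)) :
    IsOpen (principalCongruenceSubgroup n I : Set (Matrix.SpecialLinearGroup n R)) := by
  have hset : (principalCongruenceSubgroup n I : Set (Matrix.SpecialLinearGroup n R)) =
      ⋂ i, ⋂ j, (fun g => g i j - (1 : Matrix n n R) i j) ⁻¹' I := by
    ext g
    simp [mem_principalCongruenceSubgroup, Ideal.mem_matrix]
  rw [hset]
  refine isOpen_iInter_of_finite fun i => isOpen_iInter_of_finite fun j => hI.preimage ?_
  exact (continuous_subtype_val.matrix_elem i j).sub continuous_const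

theorem tendsto_principalCongruenceSubgroup_pow (hI : IsAdic I) :
    Tendsto (fun k => (principalCongruenceSubgroup n (I ^ k) :
      Set (Matrix.SpecialLinearGroup n R))) atTop (𝓝 1).smallSets := by
  have hnhds : 𝓝 (1 : Matrix.SpecialLinearGroup n R) =
      ⨅ i, ⨅ j, comap (fun g => g i j) (𝓝 ((1 : Matrix n n R) i j)) := by
    have hind : IsInducing fun (g : Matrix.SpecialLinearGroup n R) i j => g i j := ⟨rfl⟩
    simp only [hind.nhds_eq_comap, nhds_pi, Filter.pi, comap_iInf, comap_comap]
    rfl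
  simp only [hnhds, smallSets_iInf, tendsto_iInf, smallSets_comap_eq_comap_image, tendsto_comap_iff,
    tendsto_smallSets_iff]
  intro i j t ht
  obtain ⟨m, -, hm⟩ := (hI.hasBasis_nhds _).mem_iff.1 ht
  filter_upwards [eventually_ge_atTop m] with k hk
  rintro _ ⟨g, hg, rfl⟩
  exact hm ⟨_, Ideal.pow_le_pow_right hk (mem_principalCongruenceSubgroup.1 hg i j),
    add_sub_cancel _ _⟩

theorem exists_principalCongruenceSubgroup_pow_le_ker (hI : IsAdic I) {m : ℕ}
    {ρ : Matrix.SpecialLinearGroup n R →* GL (Fin m) ℂ} (hρ : RepContinuous ρ) :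
    ∃ k, principalCongruenceSubgroup n (I ^ k) ≤ ρ.ker := by
  open scoped Matrix.Norms.Operator in
  have hU : ∀ᶠ g in 𝓝 1, ‖(ρ g : Matrix (Fin m) (Fin m) ℂ) - 1‖ < 1 / 2 :=
    ((Continuous.sub hρ continuous_const).norm.tendsto 1).eventually_lt_const (by simp)
  obtain ⟨k, hk⟩ :=
    (tendsto_smallSets_iff.1 (tendsto_principalCongruenceSubgroup_pow hI) _ hU).exists
  refine ⟨k, fun g hg => Units.ext <|
    eq_one_of_forall_norm_pow_sub_one_le one_half_lt_one fun l => ?_⟩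
  have hgl := hk (pow_mem hg l)
  rw [Set.mem_ofPred_eq, map_pow, Units.val_pow_eq_pow_val] at hgl
  exact hgl.le

end CongruenceTopology

end Continuity

section RepresentationLevel

theorem le_ker_of_forall_mem_apply_eq_self {K G V : Type*} [Field K] [Group G] [AddCommGroup V]
    [Module K V] {ρ : Representation K G V} [ρ.IsIrreducible] {N : Subgroup G} [N.Normal] {v : V}
    (hv : v ≠ 0) (hfix : ∀ g ∈ N, ρ g v = v) : N ≤ ρ.ker := by
  let W : Subrepresentation ρ :=
    ⟨Representation.invariants (ρ.comp N.subtype), fun g _ hw =>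
      Representation.le_comap_invariants ρ N g hw⟩
  have hW : W ≠ ⊥ := fun h => by
    have hvW : v ∈ W.toSubmodule := fun g => hfix g g.2
    rw [h] at hvW
    exact hv hvW
  have hmem (w : V) : w ∈ W.toSubmodule := by
    rw [(eq_bot_or_eq_top W).resolve_left hW]
    trivial
  exact fun g hg => LinearMap.ext fun w => hmem w ⟨g, hg⟩

variable {K R V : Type*} [Field K] [IsAlgClosed K] [CommRing R] [AddCommGroup V] [Module K V]
  [FiniteDimensional K V] {p : ℕ} [Fact p.Prime] [NeZero (p : K)]

theorem exists_ne_zero_forall_commutator_apply_eq_self {n : Type*} [Fintype n] [DecidableEq n]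
    {ρ : Representation K (Matrix.SpecialLinearGroup n R) V} {I : Ideal R} (hpI : (p : R) ∈ I)
    {a b : ℕ} (ha : a ≠ 0) (hker : principalCongruenceSubgroup n (I ^ (2 * a)) ≤ ρ.ker)
    (hdvd : ¬ p ^ (b + 1) ∣ Module.finrank K V) :
    ∃ v : V, v ≠ 0 ∧ ∀ g ∈ principalCongruenceSubgroup n I,
      ∀ x ∈ principalCongruenceSubgroup n (I ^ a), ρ ⁅g ^ p ^ b, x⁆ v = v := by
  by_contra! hmoved
  refine hdvd (pow_dvd_finrank (ρ := ρ.comp (principalCongruenceSubgroup n I).subtype)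
    (A := (principalCongruenceSubgroup n (I ^ a)).subgroupOf _) (fun g => ⟨2 * a, ?_⟩) ?_ ?_)
  · exact hker (principalCongruenceSubgroup_mono (Ideal.pow_le_pow_right (Nat.le_succ _))
      (pow_pow_mem_principalCongruenceSubgroup hpI g.2 _))
  · refine Subgroup.commutator_le.2 fun g hg h hh => hker ?_
    rw [two_mul, pow_add]
    exact commutator_principalCongruenceSubgroup_le (Subgroup.commutator_mem_commutator hg hh)
  · intro v hv
    obtain ⟨g, hg, x, hx, hgx⟩ := hmoved v hv
    exact ⟨⟨g, hg⟩, ⟨x, principalCongruenceSubgroup_mono (Ideal.pow_le_self ha) hx⟩, hx, hgx⟩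

variable {ρ : Representation K SL(2, R) V} [ρ.IsIrreducible]

theorem principalCongruenceSubgroup_pow_le_ker_of_pow_succ_le_ker {a b : ℕ} (hb : 1 ≤ b)
    (hab : b + 3 ≤ a) (hdvd : ¬ p ^ (b + 1) ∣ Module.finrank K V)
    (hker : Γ (Ideal.span {(p : R)} ^ (a + b + 3)) ≤ ρ.ker) :
    Γ (Ideal.span {(p : R)} ^ (a + b + 2)) ≤ ρ.ker := by
  have hpI : (p : R) ∈ Ideal.span {(p : R)} := Ideal.mem_span_singleton_self _
  have hker' : Γ (Ideal.span {(p : R)} ^ (2 * a)) ≤ ρ.ker :=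
    (principalCongruenceSubgroup_mono (Ideal.pow_le_pow_right (by omega))).trans hker
  obtain ⟨v, hv, hfix⟩ := exists_ne_zero_forall_commutator_apply_eq_self hpI (by omega) hker' hdvd
  have hcast : (p : R) ^ (b + 1) = (p ^ b : ℕ) * p := by rw [Nat.cast_pow, pow_succ]
  let := MulAction.compHom V ρ
  suffices hS : Γ (Ideal.span {(p : R)} ^ (a + b + 2)) ≤ MulAction.stabilizer SL(2, R) v from
    le_ker_of_forall_mem_apply_eq_self hv hS
  refine principalCongruenceSubgroup_pow_succ_le (a := a) (b := b + 1) (by omega) (by omega)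
    (hker.trans fun g hg => LinearMap.congr_fun hg v) (fun x hx => ?_) fun x hx => ?_
  all_goals
    rw [hcast, ← transvection_pow]
    exact hfix _ ((transvection_mem_principalCongruenceSubgroup_iff _).2 hpI) x hx

theorem principalCongruenceSubgroup_pow_le_ker_of_not_dvd_finrank {b : ℕ} (hb : 1 ≤ b)
    (hdvd : ¬ p ^ (b + 1) ∣ Module.finrank K V)
    (hker : ∃ k, Γ (Ideal.span {(p : R)} ^ k) ≤ ρ.ker) :
    Γ (Ideal.span {(p : R)} ^ (2 * b + 5)) ≤ ρ.ker := by
  have hstep (d : ℕ) (hd : Γ (Ideal.span {(p : R)} ^ (2 * b + 5 + d)) ≤ ρ.ker) :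
      Γ (Ideal.span {(p : R)} ^ (2 * b + 5)) ≤ ρ.ker := by
    induction d with
    | zero => exact hd
    | succ d ih =>
      have hexp : b + 3 + d + b + 2 = 2 * b + 5 + d := by ring
      exact ih (hexp ▸ principalCongruenceSubgroup_pow_le_ker_of_pow_succ_le_ker hb
        (Nat.le_add_right _ d) hdvd (by convert hd using 3; ring))
  obtain ⟨k, hk⟩ := hker
  exact hstep k
    ((principalCongruenceSubgroup_mono (Ideal.pow_le_pow_right (Nat.le_add_left _ _))).trans hk)

end RepresentationLevel

end CongruenceSubgroups

theorem isAdic_span_natCast_padicInt (p : ℕ) [Fact p.Prime] :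
    IsAdic (Ideal.span {(p : ℤ_[p])}) := by
  refine isAdic_iff.2 ⟨fun k => ?_, fun s hs => ?_⟩
  · have hball : ((Ideal.span {(p : ℤ_[p])} ^ k : Ideal ℤ_[p]) : Set ℤ_[p]) =
        Metric.closedBall 0 ((p : ℝ) ^ (-(k : ℤ))) := by
      ext x
      rw [Ideal.span_singleton_pow, SetLike.mem_coe, mem_closedBall_zero_iff,
        PadicInt.norm_le_pow_iff_mem_span_pow]
    rw [hball]
    exact IsUltrametricDist.isOpen_closedBall _
      (zpow_ne_zero _ (by exact_mod_cast (Fact.out : p.Prime).ne_zero))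
  · obtain ⟨ε, hε, hball⟩ := Metric.mem_nhds_iff.1 hs
    obtain ⟨k, hk⟩ := PadicInt.exists_pow_neg_lt p hε
    refine ⟨k, fun x hx => hball (mem_ball_zero_iff.2 (lt_of_le_of_lt ?_ hk))⟩
    rwa [Ideal.span_singleton_pow, SetLike.mem_coe, ← PadicInt.norm_le_pow_iff_mem_span_pow] at hx

theorem finite_padicInt_quotient_span_natCast (p : ℕ) [Fact p.Prime] :
    Finite (ℤ_[p] ⧸ Ideal.span {(p : ℤ_[p])}) := by
  rw [← PadicInt.maximalIdeal_eq_span_p]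
  infer_instance

theorem representation_zeta_SL2_Zp_padic_vanishing_general (p : ℕ) [Fact p.Prime] (R : Type*)
    [CommRing R] [CharZero R] [TopologicalSpace R] [T2Space R]
    [Finite (R ⧸ Ideal.span {(p : R)})] (hR : IsAdic (Ideal.span {(p : R)})) :
    HasSum
      (fun n : ℕ =>
        ((contIrrRepCount (Matrix.SpecialLinearGroup (Fin 2) R) (n + 1) * (n + 1) ^ 2 : ℕ) :
          ℚ_[p]))
      0 := by
  have : IsTopologicalRing R := hR ▸ (Ideal.span {(p : R)}).nonarchimedean.toIsTopologicalRing
  have : IsHausdorff (Ideal.span {(p : R)}) R := hR.isHausdorff_iff.2 ‹_›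
  refine hasSum_contIrrRepCount_mul_sq_padic fun f => ?_
  have : Finite (R ⧸ Ideal.span {(p : R)} ^ (2 * (f + 1) + 5)) :=
    Ideal.finite_quotient_pow (Submodule.fg_span_singleton _) _
  refine ⟨principalCongruenceSubgroup (Fin 2) (Ideal.span {(p : R)} ^ (2 * (f + 1) + 5)),
    inferInstance, inferInstance,
    isOpen_principalCongruenceSubgroup ((isAdic_iff.1 hR).1 _), ?_, ?_⟩
  · have hp : p ≠ 0 := (Fact.out : p.Prime).ne_zero
    exact (pow_dvd_pow p (by omega)).trans <| pow_succ_dvd_index_principalCongruenceSubgroup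
      zero_ne_one (natCast_pow_notMem_span_pow_succ hp _)
      (Ideal.pow_mem_pow (Ideal.mem_span_singleton_self _) _)
  · intro n ρ hn hcont hirr
    have := repIsIrreducible_iff.1 hirr
    rw [← ker_matrixRep]
    refine principalCongruenceSubgroup_pow_le_ker_of_not_dvd_finrank le_add_self ?_ ?_
    · rw [Module.finrank_fin_fun]
      exact mt (pow_dvd_pow p (by omega)).trans hn
    · rw [ker_matrixRep]
      exact exists_principalCongruenceSubgroup_pow_le_ker hR hcont

/-- **`p`-adic vanishing of the representation zeta function of `SL₂(ℤ_p)` at `s = -2`**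
(González-Sánchez–Jaikin-Zapirain–Klopsch). For an odd prime `p`, the series
`∑_{n ≥ 1} rₙ(SL₂(ℤ_p)) n²`, with terms regarded as elements of `ℚ_p`, converges in `ℚ_p`
with sum `0`. -/
theorem representation_zeta_SL2_Zp_padic_vanishing (p : ℕ) [Fact p.Prime] (hp : Odd p) :
    HasSum
      (fun n : ℕ =>
        ((contIrrRepCount (Matrix.SpecialLinearGroup (Fin 2) ℤ_[p]) (n + 1) * (n + 1) ^ 2 : ℕ) :
          ℚ_[p]))
      0 := by
  have := finite_padicInt_quotient_span_natCast p
  exact representation_zeta_SL2_Zp_padic_vanishing_general p ℤ_[p] (isAdic_span_natCast_padicInt p)
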